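/- Let H be a pointed Hopf algebra of discrete corepresentation type over an algebraically closed field and let Q be the Ext-quiver of the category of right H-comodules. Then at each vertex of Q there are at most 2 outgoing arrows and at most 2 incoming arrows. (In particular, Q is Schurian: there is at most one arrow between any two vertices.) -/

import Mathlib

/-!
A matrix of skew primitives between grouplikes `s i` and `t j` defines an extension of the comodule
`⨁ K (t j)` by `⨁ K (s i)`, and modulo the trivial skew primitives `g - h` a morphism of such
extensions becomes a morphism of representations of the Ext-quiver. Hence an infinite family of
pairwise orthogonal bricks with a fixed dimension vector, supported on a bipartite piece of the
quiver, contradicts discreteness. Two parallel arrows carry such a family of Kronecker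
representations. For three arrows at a vertex, left translation by grouplikes permutes the arrows
of the quiver: if `g → h 0`, `g → h 1`, `g → h 2` are arrows, then so is
`h 0 * (h i)⁻¹ * g → h 0` for every `i`. These arrows form a quiver of type `D̃₅`, which carries a
family of bricks given by four lines in a plane with varying cross-ratio.
-/

open TensorProduct



section Basic

variable (K : Type) [CommRing K] (H : Type) [AddCommGroup H] [Module K H] [Coalgebra K H]

/-- A grouplike element of a coalgebra. -/
def IsGrouplike (g : H) : Prop :=
  Coalgebra.counit (R := K) g = 1 ∧ Coalgebra.comul (R := K) g = g ⊗ₜ[K] g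

/-- The space `P(g,h)` of `(g,h)`-skew primitive elements. -/
noncomputable def skewPrim (g h : H) : Submodule K H :=
  LinearMap.ker (Coalgebra.comul (R := K) (A := H)
    - (TensorProduct.mk K H H g + (TensorProduct.mk K H H).flip h))

lemma mem_skewPrim {g h x : H} :
    x ∈ skewPrim K H g h ↔ Coalgebra.comul (R := K) x = g ⊗ₜ[K] x + x ⊗ₜ[K] h := by
  rw [skewPrim, LinearMap.mem_ker, LinearMap.sub_apply, sub_eq_zero, LinearMap.add_apply]
  rfl

/-- A submodule which is a subcoalgebra. -/
def IsSubcoalgebra (D : Submodule K H) : Prop :=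
  ∀ x ∈ D, Coalgebra.comul (R := K) x ∈ LinearMap.range (TensorProduct.map D.subtype D.subtype)

/-- A coalgebra is pointed if every simple subcoalgebra is one-dimensional. -/
def IsPointedCoalgebra : Prop :=
  ∀ D : Submodule K H, IsSubcoalgebra K H D → D ≠ ⊥ →
    (∀ D' : Submodule K H, IsSubcoalgebra K H D' → D' ≤ D → D' = ⊥ ∨ D' = D) →
    Module.finrank K ↥D = 1

end Basic

section Comodules

variable (K : Type) [CommRing K] (H : Type) [AddCommGroup H] [Module K H] [Coalgebra K H]

/-- A (finite or infinite dimensional) right `H`-comodule. -/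
structure Comod where
  carrier : Type
  [acg : AddCommGroup carrier]
  [mod : Module K carrier]
  ρ : carrier →ₗ[K] carrier ⊗[K] H
  counit_comp : ∀ m : carrier,
    (TensorProduct.rid K carrier)
      ((LinearMap.lTensor carrier (Coalgebra.counit (R := K) (A := H))) (ρ m)) = m
  coassoc : ∀ m : carrier,
    (LinearMap.lTensor carrier (Coalgebra.comul (R := K) (A := H))) (ρ m)
      = (TensorProduct.assoc K carrier H H) ((LinearMap.rTensor H ρ) (ρ m))

attribute [instance] Comod.acg Comod.mod

/-- A morphism of right `H`-comodules. -/
structure ComodHom (M N : Comod K H) where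
  toLin : M.carrier →ₗ[K] N.carrier
  compat : ∀ m : M.carrier, N.ρ (toLin m) = (LinearMap.rTensor H toLin) (M.ρ m)

/-- Isomorphism of comodules. -/
def ComodIso (M N : Comod K H) : Prop :=
  ∃ f : ComodHom K H M N, Function.Bijective f.toLin

/-- An indecomposable comodule: it is nonzero, and (equivalently to the usual definition,
since idempotents split in comodule categories) every idempotent endomorphism is `0` or `1`. -/
def Comod.Indec (M : Comod K H) : Prop :=
  (∃ m : M.carrier, m ≠ 0) ∧
    ∀ f : ComodHom K H M M, f.toLin ∘ₗ f.toLin = f.toLin →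
      f.toLin = 0 ∨ f.toLin = LinearMap.id

/-- A submodule of a comodule which is a subcomodule. -/
def IsSubcomod (M : Comod K H) (N : Submodule K M.carrier) : Prop :=
  ∀ m ∈ N, M.ρ m ∈ LinearMap.range (LinearMap.rTensor H N.subtype)

/-- The coaction of `M` factors through the subcoalgebra `D`, i.e. `M` is a `D`-comodule. -/
def CoactsThrough (M : Comod K H) (D : Submodule K H) : Prop :=
  ∀ m : M.carrier, M.ρ m ∈ LinearMap.range (LinearMap.lTensor M.carrier D.subtype)

/-- `M` has dimension vector `d` : it admits a composition series whose successive quotients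
are the one-dimensional comodules associated to grouplike elements, where for every `h` the
grouplike `h` occurs exactly `d h` times. -/
def HasDimVector (M : Comod K H) (d : H → ℕ) : Prop :=
  ∃ (k : ℕ) (F : Fin (k+1) → Submodule K M.carrier) (g : Fin k → H),
    F 0 = ⊥ ∧ F (Fin.last k) = ⊤ ∧
    (∀ i : Fin k, F i.castSucc ≤ F i.succ) ∧
    (∀ i : Fin (k+1), IsSubcomod K H M (F i)) ∧
    (∀ i : Fin k, IsGrouplike K H (g i)) ∧
    (∀ i : Fin k, ∃ m : M.carrier, m ∈ F i.succ ∧ m ∉ F i.castSucc ∧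
        F i.succ = F i.castSucc ⊔ Submodule.span K {m}) ∧
    (∀ i : Fin k, ∀ m ∈ F i.succ,
        M.ρ m - m ⊗ₜ[K] (g i) ∈ LinearMap.range (LinearMap.rTensor H (F i.castSucc).subtype)) ∧
    (∀ h : H, d h = Nat.card {i : Fin k // g i = h})

/-- A pointed coalgebra is of discrete corepresentation type if for every dimension vector `d`
there are only finitely many isomorphism classes of indecomposable comodules with
dimension vector `d`. -/
def DiscreteCorepType : Prop :=
  ∀ d : H → ℕ, ∃ (N : ℕ) (R : Fin N → Comod K H),
    ∀ M : Comod K H, M.Indec K H → HasDimVector K H M d → ∃ i, ComodIso K H M (R i)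

/-- A subcoalgebra `D ≤ H` is of finite corepresentation type: there are only finitely many
isomorphism classes of finite-dimensional indecomposable comodules whose coaction factors
through `D`. -/
def FinCorepTypeOn (D : Submodule K H) : Prop :=
  ∃ (N : ℕ) (R : Fin N → Comod K H),
    ∀ M : Comod K H, M.Indec K H → Module.Finite K M.carrier → CoactsThrough K H M D →
      ∃ i, ComodIso K H M (R i)

/-- A coalgebra is of finite corepresentation type. -/
def FinCorepType : Prop := FinCorepTypeOn K H ⊤

end Comodules

open scoped Classical

section Pointed

variable (K : Type) [CommRing K] (H : Type) [Ring H] [Bialgebra K H]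

/-- `g` is a grouplike element belonging to the subcoalgebra `B`. -/
def grouplikeIn (B : Submodule K H) (g : H) : Prop := IsGrouplike K H g ∧ g ∈ B

/-- In the Ext-quiver of the subcoalgebra `B`, there are exactly `c` arrows from the
grouplike `g` to the grouplike `h` : since the trivial skew primitive `g - h` is nonzero
precisely when `g ≠ h`, this says `dim (P(g,h) ⊓ B) = c + 1` for `g ≠ h`, and
`dim (P(g,g) ⊓ B) = c` for loops. -/
def arrowsEq (B : Submodule K H) (g h : H) (c : ℕ) : Prop :=
  Module.rank K ↥(skewPrim K H g h ⊓ B) = if g = h then (c : Cardinal) else (c : Cardinal) + 1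

/-- The number of arrows from `g` to `h` in the Ext-quiver, as a cardinal: the dimension of
the space of skew primitives modulo the trivial ones. -/
noncomputable def ntRank (g h : H) : Cardinal :=
  Module.rank K
    (↥(skewPrim K H g h) ⧸
      Submodule.comap (skewPrim K H g h).subtype (Submodule.span K {g - h}))

/-- Two grouplikes are linked in `D` if there is a nontrivial skew primitive (in either
direction) between them lying in `D`. -/
def LinkedIn (D : Submodule K H) (g h : H) : Prop :=
  ∃ x ∈ D, (x ∈ skewPrim K H g h ∨ x ∈ skewPrim K H h g) ∧ x ∉ Submodule.span K {g - h}

/-- The Ext-quiver of the subcoalgebra `D` is connected. -/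
def ConnectedOn (D : Submodule K H) : Prop :=
  ∀ g h : H, IsGrouplike K H g → g ∈ D → IsGrouplike K H h → h ∈ D →
    Relation.ReflTransGen (LinkedIn K H D) g h

/-- `B` is the link-indecomposable component containing `1` : a subcoalgebra containing `1`,
maximal with respect to its Ext-quiver being connected. -/
structure IsLIC1 (B : Submodule K H) : Prop where
  subcoalg : IsSubcoalgebra K H B
  one_mem : (1 : H) ∈ B
  connected : ConnectedOn K H B
  maximal : ∀ B' : Submodule K H, IsSubcoalgebra K H B' → ConnectedOn K H B' →
    B ≤ B' → B' = B

end Pointed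

/-- `a^i * a'^(-i)`, i.e. the `i`-th power (for `i : ℤ`) of `a` when `a'` is a two-sided
inverse of `a`. -/
def zp {B : Type} [Monoid B] (a a' : B) (i : ℤ) : B := a ^ i.toNat * a' ^ (-i).toNat

section Hopf

variable (K : Type) [CommRing K] (H : Type) [Ring H] [HopfAlgebra K H]

/-- The antipode applied to an element; for a grouplike `g` this is its inverse `g⁻¹`. -/
noncomputable def inv' (g : H) : H := HopfAlgebra.antipode (R := K) g

/-- The Ext-quiver of the subcoalgebra `B` is the (possibly folded) grid quiver `Q^{m,n}` :
the grouplikes of `B` form the group `⟨a, b | ab = ba, aᵐ = bⁿ⟩`, and at each vertex `g`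
there is exactly one arrow `g → g·a` and one arrow `g → g·b`, and no other arrows. -/
def GridQuiverOn (B : Submodule K H) (a b : H) (m n : ℤ) : Prop :=
  grouplikeIn K H B a ∧ grouplikeIn K H B b ∧ a * b = b * a ∧
  a * inv' K H a = 1 ∧ inv' K H a * a = 1 ∧ b * inv' K H b = 1 ∧ inv' K H b * b = 1 ∧
  (∀ i j : ℤ, zp a (inv' K H a) i * zp b (inv' K H b) j = 1 ↔
      ∃ l : ℤ, i = l * m ∧ j = -(l * n)) ∧
  (∀ g : H, grouplikeIn K H B g ↔
      ∃ i j : ℤ, g = zp a (inv' K H a) i * zp b (inv' K H b) j) ∧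
  (∀ g h : H, grouplikeIn K H B g → grouplikeIn K H B h →
      arrowsEq K H B g h (if h = g * a ∨ h = g * b then 1 else 0))

/-- The Ext-quiver of `B` is a single vertex, and `G(B) = {1}`. -/
def SingleVertexQuiver (B : Submodule K H) : Prop :=
  (∀ g : H, grouplikeIn K H B g ↔ g = 1) ∧ arrowsEq K H B 1 1 0

/-- The Ext-quiver of `B` is a complete oriented cycle, and `G(B) = ⟨a | aⁿ = 1⟩`. -/
def CycleQuiver (B : Submodule K H) : Prop :=
  ∃ (a : H) (nn : ℕ), 0 < nn ∧ grouplikeIn K H B a ∧ a ^ nn = 1 ∧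
    (∀ kk : ℕ, 0 < kk → kk < nn → a ^ kk ≠ 1) ∧
    (∀ g : H, grouplikeIn K H B g ↔ ∃ i : ℕ, g = a ^ i) ∧
    (∀ g h : H, grouplikeIn K H B g → grouplikeIn K H B h →
      arrowsEq K H B g h (if h = g * a then 1 else 0))

/-- The Ext-quiver of `B` is the doubly infinite linear quiver `··· → · → · → ···`, and
`G(B) = ⟨a⟩` is infinite cyclic. -/
def LineQuiver (B : Submodule K H) : Prop :=
  ∃ a : H, grouplikeIn K H B a ∧ (∀ kk : ℕ, 0 < kk → a ^ kk ≠ 1) ∧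
    (∀ g : H, grouplikeIn K H B g ↔ ∃ i j : ℕ, a ^ i * g = a ^ j) ∧
    (∀ g h : H, grouplikeIn K H B g → grouplikeIn K H B h →
      arrowsEq K H B g h (if h = g * a then 1 else 0))

end Hopf

open scoped Matrix

universe u

theorem cardinalSum_le_mk_support {T : Type u} {f : T → Cardinal.{u}} (hf : ∀ u, f u ≤ 1) :
    Cardinal.sum f ≤ Cardinal.mk {u : T // f u ≠ 0} := by
  have hsub (u : T) : Subsingleton (f u).out :=
    Cardinal.le_one_iff_subsingleton.1 ((Cardinal.mk_out _).trans_le (hf u))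
  have hne (p : Σ u, (f u).out) : f p.1 ≠ 0 := by
    rw [← Cardinal.mk_out (f p.1), Cardinal.mk_ne_zero_iff]
    exact ⟨p.2⟩
  refine Cardinal.mk_le_of_injective (f := fun p => ⟨p.1, hne p⟩) ?_
  rintro ⟨u, x⟩ ⟨v, y⟩ huv
  obtain rfl : u = v := congrArg Subtype.val huv
  rw [Subsingleton.elim x y]

theorem cardinalSum_le_of_forall_injective {T : Type u} {f : T → Cardinal.{u}} (hf : ∀ u, f u ≤ 1)
    {n : ℕ} (hn : ∀ e : Fin (n + 1) → T, Function.Injective e → ∃ i, f (e i) = 0) :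
    Cardinal.sum f ≤ n := by
  refine (cardinalSum_le_mk_support hf).trans (not_lt.1 fun hlt => ?_)
  have hcard : Cardinal.lift.{u} (Cardinal.mk (Fin (n + 1))) ≤
      Cardinal.lift.{0} (Cardinal.mk {u : T // f u ≠ 0}) := by
    simpa using Cardinal.natCast_add_one_le_iff.2 hlt
  obtain ⟨e⟩ := Cardinal.lift_mk_le'.1 hcard
  obtain ⟨i, hi⟩ := hn (fun i => (e i).1) (Subtype.val_injective.comp e.injective)
  exact (e i).2 hi

section Tensor

variable {K V H : Type*} [CommRing K] [AddCommGroup V] [Module K V] [AddCommGroup H] [Module K H]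

theorem tmul_mem_range_rTensor_subtype {N : Submodule K V} {v : V} (hv : v ∈ N) (h : H) :
    v ⊗ₜ[K] h ∈ LinearMap.range (LinearMap.rTensor H N.subtype) :=
  ⟨(⟨v, hv⟩ : N) ⊗ₜ h, by simp⟩

theorem range_rTensor_subtype_mono {N N' : Submodule K V} (hN : N ≤ N') :
    LinearMap.range (LinearMap.rTensor H N.subtype) ≤
      LinearMap.range (LinearMap.rTensor H N'.subtype) := by
  rw [← Submodule.subtype_comp_inclusion _ _ hN, LinearMap.rTensor_comp]
  exact LinearMap.range_comp_le_range _ _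

end Tensor

section Comodules

variable {K : Type} [CommRing K] {H : Type} [AddCommGroup H] [Module K H] [Coalgebra K H]

theorem ComodIso.symm {M N : Comod K H} : ComodIso K H M N → ComodIso K H N M := by
  rintro ⟨f, hf⟩
  let e := LinearEquiv.ofBijective f.toLin hf
  refine ⟨⟨e.symm.toLinearMap, fun m => ?_⟩, e.symm.bijective⟩
  have hsymm : e.symm.toLinearMap ∘ₗ f.toLin = LinearMap.id :=
    LinearMap.ext e.symm_apply_apply
  have hcompat := f.compat (e.symm m)
  rw [show f.toLin (e.symm m) = m from e.apply_symm_apply m] at hcompat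
  rw [hcompat, ← LinearMap.rTensor_comp_apply, hsymm, LinearMap.rTensor_id, LinearMap.id_apply]
  rfl

theorem ComodIso.trans {M N P : Comod K H} :
    ComodIso K H M N → ComodIso K H N P → ComodIso K H M P := by
  rintro ⟨f, hf⟩ ⟨g, hg⟩
  refine ⟨⟨g.toLin ∘ₗ f.toLin, fun m => ?_⟩, hg.comp hf⟩
  rw [LinearMap.comp_apply, g.compat, f.compat, ← LinearMap.rTensor_comp_apply]

theorem not_discreteCorepType_of_infinite_family {α : Type*} [Infinite α] (M : α → Comod K H)
    (d : H → ℕ) (hindec : ∀ a, (M a).Indec K H) (hdim : ∀ a, HasDimVector K H (M a) d)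
    (hiso : ∀ a b, ComodIso K H (M a) (M b) → a = b) : ¬ DiscreteCorepType K H := by
  intro hdiscrete
  obtain ⟨N, R, hR⟩ := hdiscrete d
  choose q hq using fun a => hR (M a) (hindec a) (hdim a)
  obtain ⟨a, b, hne, hab⟩ := Finite.exists_ne_map_eq_of_infinite q
  exact hne (hiso a b ((hq a).trans (hab ▸ (hq b).symm)))

theorem isGrouplike_coe (g : GroupLike K H) : IsGrouplike K H g :=
  ⟨g.2.counit_eq_one, g.2.comul_eq_tmul_self⟩

/-- A grouplike element, bundled. -/
def IsGrouplike.toGroupLike {g : H} (hg : IsGrouplike K H g) : GroupLike K H :=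
  ⟨g, ⟨hg.1, hg.2⟩⟩

theorem IsGrouplike.toGroupLike_injective : Function.Injective
    fun u : {u : H // IsGrouplike K H u} => u.2.toGroupLike :=
  fun _ _ huv => Subtype.ext (congrArg GroupLike.val huv)

theorem hasDimVector_of_basis [Nontrivial K] (M : Comod K H) {n : ℕ}
    (b : Module.Basis (Fin n) K M.carrier) (γ : Fin n → GroupLike K H)
    (hρ : ∀ i, M.ρ (b i) - b i ⊗ₜ[K] (γ i : H) ∈
      LinearMap.range (LinearMap.rTensor H (b.flag i.castSucc).subtype)) :
    HasDimVector K H M (fun h => Nat.card {i : Fin n // (γ i : H) = h}) := by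
  have hsub (k : Fin (n + 1)) : IsSubcomod K H M (b.flag k) := by
    refine (b.flag_le_iff (p := Submodule.comap M.ρ
      (LinearMap.range (LinearMap.rTensor H (b.flag k).subtype)))).2 fun i hi => ?_
    rw [Submodule.mem_comap, ← sub_add_cancel (M.ρ (b i)) (b i ⊗ₜ[K] (γ i : H))]
    exact Submodule.add_mem _ (range_rTensor_subtype_mono (b.flag_mono hi.le) (hρ i))
      (tmul_mem_range_rTensor_subtype (b.self_mem_flag hi) _)
  have hgr (i : Fin n) : b.flag i.succ ≤
      Submodule.comap (M.ρ - (TensorProduct.mk K M.carrier H).flip (γ i : H))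
        (LinearMap.range (LinearMap.rTensor H (b.flag i.castSucc).subtype)) := by
    rw [b.flag_succ, sup_le_iff, Submodule.span_singleton_le_iff_mem]
    exact ⟨hρ i, fun m hm => Submodule.sub_mem _ (hsub _ m hm)
      (tmul_mem_range_rTensor_subtype hm _)⟩
  exact ⟨n, b.flag, fun i => γ i, b.flag_zero, b.flag_last,
    fun i => b.flag_mono i.castSucc_le_succ, hsub, fun i => isGrouplike_coe _,
    fun i => ⟨b i, by simp, by simp, by rw [b.flag_succ, sup_comm]⟩, fun i m hm => hgr i hm,
    fun h => rfl⟩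

end Comodules

section Matrices

variable {K : Type} [CommRing K] {H : Type} [AddCommGroup H] [Module K H]
variable {ι κ : Type} [Fintype ι] [DecidableEq ι] [Fintype κ] [DecidableEq κ]

/-- The map `K^ι → K^ι ⊗ H` with matrix `X`, the coaction of the comodule with coefficient
matrix `X`. -/
noncomputable def coactionOfMatrix (K : Type) [CommRing K] {H : Type} [AddCommGroup H] [Module K H]
    {ι : Type} [Fintype ι] [DecidableEq ι] (X : Matrix ι ι H) : (ι → K) →ₗ[K] (ι → K) ⊗[K] H :=
  (Pi.basisFun K ι).constr K fun j => ∑ i, Pi.single i 1 ⊗ₜ[K] X i j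

theorem coactionOfMatrix_single (X : Matrix ι ι H) (j : ι) :
    coactionOfMatrix K X (Pi.single j 1) = ∑ i, Pi.single i 1 ⊗ₜ[K] X i j := by
  rw [← Pi.basisFun_apply, coactionOfMatrix, Module.Basis.constr_basis]

variable [Coalgebra K H]

/-- A multiplicative matrix over a coalgebra: its entries satisfy the relations of the dual basis
of a matrix algebra. These are the coefficient matrices of the finite free comodules. -/
structure IsMultiplicative (K : Type) [CommRing K] {H : Type} [AddCommGroup H] [Module K H]
    [Coalgebra K H] {ι : Type} [Fintype ι] [DecidableEq ι] (X : Matrix ι ι H) : Prop where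
  counit : ∀ i j, Coalgebra.counit (R := K) (X i j) = (1 : Matrix ι ι K) i j
  comul : ∀ i j, Coalgebra.comul (R := K) (X i j) = ∑ k, X i k ⊗ₜ[K] X k j

/-- The comodule `K^ι` with coefficient matrix `X`. -/
noncomputable abbrev Comod.ofMatrix {X : Matrix ι ι H} (hX : IsMultiplicative K X) :
    Comod K H where
  carrier := ι → K
  ρ := coactionOfMatrix K X
  counit_comp m := by
    suffices h : (TensorProduct.rid K (ι → K)).toLinearMap ∘ₗ
        LinearMap.lTensor (ι → K) (Coalgebra.counit (R := K) (A := H)) ∘ₗ coactionOfMatrix K X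
          = LinearMap.id from LinearMap.congr_fun h m
    refine (Pi.basisFun K ι).ext fun j => ?_
    simp [coactionOfMatrix_single, hX.counit, Matrix.one_apply]
  coassoc m := by
    suffices h : LinearMap.lTensor (ι → K) (Coalgebra.comul (R := K) (A := H)) ∘ₗ
        coactionOfMatrix K X = (TensorProduct.assoc K (ι → K) H H).toLinearMap ∘ₗ
          LinearMap.rTensor H (coactionOfMatrix K X) ∘ₗ coactionOfMatrix K X from
      LinearMap.congr_fun h m
    refine (Pi.basisFun K ι).ext fun j => ?_
    simp only [Pi.basisFun_apply, LinearMap.comp_apply, coactionOfMatrix_single, map_sum,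
      LinearMap.lTensor_tmul, hX.comul, LinearMap.rTensor_tmul, LinearEquiv.coe_coe,
      TensorProduct.sum_tmul, TensorProduct.tmul_sum, TensorProduct.assoc_tmul]
    exact Finset.sum_comm

theorem hasDimVector_ofMatrix [Nontrivial K] {X : Matrix ι ι H} (hX : IsMultiplicative K X) {n : ℕ}
    (e : Fin n ≃ ι) (htri : (X.submatrix e e).BlockTriangular id) (γ : ι → GroupLike K H)
    (hdiag : ∀ i, X i i = γ i) :
    HasDimVector K H (Comod.ofMatrix hX)
      (fun h => Nat.card {i : Fin n // (γ (e i) : H) = h}) := by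
  let b : Module.Basis (Fin n) K (ι → K) := (Pi.basisFun K ι).reindex e.symm
  have hb (i : Fin n) : b i = Pi.single (e i) 1 := by simp [b]
  refine hasDimVector_of_basis (Comod.ofMatrix hX) b (fun i => γ (e i)) fun i => ?_
  change coactionOfMatrix K X (b i) - _ ∈ _
  rw [hb, coactionOfMatrix_single, ← e.sum_comp, ← Finset.add_sum_erase _ _ (Finset.mem_univ i),
    hdiag, add_sub_cancel_left]
  refine Submodule.sum_mem _ fun k hk => ?_
  obtain hik | hki := (Finset.ne_of_mem_erase hk).symm.lt_or_gt
  · rw [show X (e k) (e i) = 0 from htri hik, TensorProduct.tmul_zero]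
    exact Submodule.zero_mem _
  · rw [← hb]
    exact tmul_mem_range_rTensor_subtype (b.self_mem_flag (by simpa using hki)) _

/-- The matrix of a morphism of comodules given by coefficient matrices. -/
noncomputable def ComodHom.matrix {X : Matrix ι ι H} {Y : Matrix κ κ H}
    {hX : IsMultiplicative K X} {hY : IsMultiplicative K Y}
    (f : ComodHom K H (Comod.ofMatrix hX) (Comod.ofMatrix hY)) : Matrix κ ι K :=
  LinearMap.toMatrix' f.toLin

theorem ComodHom.toLin_eq_toLin'_matrix {X : Matrix ι ι H} {Y : Matrix κ κ H}
    {hX : IsMultiplicative K X} {hY : IsMultiplicative K Y}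
    (f : ComodHom K H (Comod.ofMatrix hX) (Comod.ofMatrix hY)) :
    f.toLin = Matrix.toLin' f.matrix :=
  (Matrix.toLin'_toMatrix' _).symm

theorem ComodHom.sum_matrix_smul_eq {X : Matrix ι ι H} {Y : Matrix κ κ H}
    {hX : IsMultiplicative K X} {hY : IsMultiplicative K Y}
    (f : ComodHom K H (Comod.ofMatrix hX) (Comod.ofMatrix hY)) (i : κ) (j : ι) :
    ∑ k, f.matrix k j • Y i k = ∑ k, f.matrix i k • X k j := by
  have hcompat := f.compat (Pi.single j 1)
  have hsingle : Matrix.toLin' f.matrix (Pi.single j 1) = ∑ k, f.matrix k j • Pi.single k 1 := by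
    ext
    simp [Pi.single_apply]
  rw [f.toLin_eq_toLin'_matrix] at hcompat
  change coactionOfMatrix K Y (Matrix.toLin' f.matrix (Pi.single j 1)) =
    LinearMap.rTensor H (Matrix.toLin' f.matrix) (coactionOfMatrix K X (Pi.single j 1)) at hcompat
  rw [hsingle] at hcompat
  simpa [coactionOfMatrix_single, Pi.single_apply] using
    congrArg (TensorProduct.lid K H ∘ LinearMap.rTensor H (LinearMap.proj i)) hcompat

end Matrices

section SkewComodules

variable {K : Type} [CommRing K] {H : Type} [AddCommGroup H] [Module K H] [Coalgebra K H]
variable {ι κ : Type}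

theorem counit_coe_skewPrim {g h : GroupLike K H} (x : skewPrim K H g h) :
    Coalgebra.counit (R := K) (x : H) = 0 := by
  have hcounit := Coalgebra.rTensor_counit_comul (R := K) (x : H)
  rw [(mem_skewPrim K H).1 x.2] at hcounit
  simpa using congrArg (Coalgebra.counit (R := K) ∘ TensorProduct.lid K H) hcounit

/-- Matrices whose `(i, j)` entry is an `(s i, t j)`-skew primitive: they parametrize the
extensions of the comodule `⨁ K (t j)` by the comodule `⨁ K (s i)`. -/
abbrev SkewMatrix (s : ι → GroupLike K H) (t : κ → GroupLike K H) : Type :=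
  ∀ i j, skewPrim K H (s i) (t j)

section Extension

variable [DecidableEq ι] [DecidableEq κ]
variable {s : ι → GroupLike K H} {t : κ → GroupLike K H}

/-- The coefficient matrix of the extension of `⨁ K (t j)` by `⨁ K (s i)` given by `x`. -/
def extMatrix (x : SkewMatrix s t) : Matrix (ι ⊕ κ) (ι ⊕ κ) H :=
  Matrix.fromBlocks (Matrix.diagonal fun i => s i) (Matrix.of fun i j => x i j) 0
    (Matrix.diagonal fun j => t j)

theorem extMatrix_inl_inl (x : SkewMatrix s t) (i i' : ι) :
    extMatrix x (.inl i) (.inl i') = if i = i' then (s i : H) else 0 :=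
  rfl

theorem extMatrix_inl_inr (x : SkewMatrix s t) (i : ι) (j : κ) :
    extMatrix x (.inl i) (.inr j) = x i j :=
  rfl

theorem extMatrix_inr_inl (x : SkewMatrix s t) (j : κ) (i : ι) :
    extMatrix x (.inr j) (.inl i) = 0 :=
  rfl

theorem extMatrix_inr_inr (x : SkewMatrix s t) (j j' : κ) :
    extMatrix x (.inr j) (.inr j') = if j = j' then (t j : H) else 0 :=
  rfl

variable [Fintype ι] [Fintype κ]

theorem isMultiplicative_extMatrix (x : SkewMatrix s t) : IsMultiplicative K (extMatrix x) where
  counit := by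
    rintro (i | i) (j | j)
    · obtain rfl | hij := eq_or_ne i j <;> simp [extMatrix, *]
    · simp [extMatrix, counit_coe_skewPrim]
    · simp [extMatrix]
    · obtain rfl | hij := eq_or_ne i j <;> simp [extMatrix, *]
  comul := by
    rintro (i | i) (j | j)
    · obtain rfl | hij := eq_or_ne i j <;>
        simp [extMatrix, Matrix.diagonal_apply, TensorProduct.ite_tmul, *]
    · simp [extMatrix, Matrix.diagonal_apply, TensorProduct.ite_tmul, TensorProduct.tmul_ite,
        (mem_skewPrim K H).1 (x i j).2]
    · simp [extMatrix]
    · obtain rfl | hij := eq_or_ne i j <;>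
        simp [extMatrix, Matrix.diagonal_apply, TensorProduct.ite_tmul, *]

/-- The extension of the comodule `⨁ K (t j)` by the comodule `⨁ K (s i)` given by `x`. -/
noncomputable abbrev extComod (x : SkewMatrix s t) : Comod K H :=
  Comod.ofMatrix (isMultiplicative_extMatrix x)

end Extension

theorem hasDimVector_extComod [Nontrivial K] {m n : ℕ} {s : Fin m → GroupLike K H}
    {t : Fin n → GroupLike K H} (x : SkewMatrix s t) :
    HasDimVector K H (extComod x) (fun h => Nat.card
      {i : Fin (m + n) // ((Sum.elim s t (finSumFinEquiv.symm i) : GroupLike K H) : H) = h}) := by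
  refine hasDimVector_ofMatrix _ finSumFinEquiv.symm ?_ (Sum.elim s t) ?_
  · intro k l hlk
    obtain ⟨k, rfl⟩ := finSumFinEquiv.surjective k
    obtain ⟨l, rfl⟩ := finSumFinEquiv.surjective l
    rcases k with k | k <;> rcases l with l | l
    · have : k ≠ l := by rintro rfl; exact lt_irrefl _ hlk
      simp [extMatrix, this]
    · simp only [finSumFinEquiv_apply_left, finSumFinEquiv_apply_right, Fin.lt_def, id_eq,
        Fin.val_natAdd, Fin.val_castAdd] at hlk
      omega
    · simp [extMatrix]
    · have : k ≠ l := by rintro rfl; exact lt_irrefl _ hlk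
      simp [extMatrix, this]
  · rintro (i | i) <;> simp [extMatrix]

variable (K H) in
/-- A linear form on each space of skew primitives modulo the trivial ones. It is stored as a form
on all of `H`, so that forms at equal pairs of grouplikes can be identified without transport. -/
structure ArrowForm where
  form : GroupLike K H → GroupLike K H → Module.Dual K H
  form_eq : ∀ g h, form g h g = form g h h

/-- The matrix of coordinates of a matrix of skew primitives with respect to an arrow form. -/
def ArrowForm.coord (φ : ArrowForm K H) {s : ι → GroupLike K H} {t : κ → GroupLike K H}
    (x : SkewMatrix s t) : Matrix ι κ K :=
  Matrix.of fun i j => φ.form (s i) (t j) (x i j)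

namespace ArrowForm

variable (φ : ArrowForm K H) {s : ι → GroupLike K H} {t : κ → GroupLike K H} (x : SkewMatrix s t)

theorem coord_mul_apply {μ : Type} [Fintype κ] {D : Matrix κ μ K} {j : μ} {u : GroupLike K H}
    (hD : ∀ k, D k j ≠ 0 → t k = u) (i : ι) :
    (φ.coord x * D) i j = φ.form (s i) u (∑ k, D k j • (x i k : H)) := by
  rw [Matrix.mul_apply, map_sum]
  refine Finset.sum_congr rfl fun k _ => ?_
  by_cases hk : D k j = 0
  · simp [hk]
  · simp [coord, hD k hk, mul_comm]

theorem mul_coord_apply {μ : Type} [Fintype ι] {A : Matrix μ ι K} {i : μ} {u : GroupLike K H}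
    (hA : ∀ k, A i k ≠ 0 → s k = u) (j : κ) :
    (A * φ.coord x) i j = φ.form u (t j) (∑ k, A i k • (x k j : H)) := by
  rw [Matrix.mul_apply, map_sum]
  refine Finset.sum_congr rfl fun k _ => ?_
  by_cases hk : A i k = 0
  · simp [hk]
  · simp [coord, hA k hk]

end ArrowForm

end SkewComodules

section Homs

variable {K : Type} [Field K] {H : Type} [AddCommGroup H] [Module K H] [Coalgebra K H]
variable {ι κ : Type}

theorem eq_of_smul_coe_eq {p : K} (hp : p ≠ 0) {g h : GroupLike K H}
    (hgh : p • (g : H) = p • (h : H)) : g = h :=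
  GroupLike.val_injective (smul_right_injective H hp hgh)

variable [DecidableEq ι] [DecidableEq κ] [Fintype ι] [Fintype κ]
variable {s : ι → GroupLike K H} {t : κ → GroupLike K H} {x y : SkewMatrix s t}
variable (f : ComodHom K H (extComod x) (extComod y))

theorem toBlocks₁₁_smul_add (i j : ι) :
    f.matrix.toBlocks₁₁ i j • (s i : H) + ∑ k, f.matrix.toBlocks₂₁ k j • (y i k : H) =
      f.matrix.toBlocks₁₁ i j • (s j : H) := by
  simpa [Matrix.toBlocks₁₁, Matrix.toBlocks₂₁, extMatrix_inl_inl, extMatrix_inl_inr,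
    extMatrix_inr_inl] using
    f.sum_matrix_smul_eq (.inl i) (.inl j)

theorem toBlocks₁₂_smul_add (i : ι) (j : κ) :
    f.matrix.toBlocks₁₂ i j • (s i : H) + ∑ k, f.matrix.toBlocks₂₂ k j • (y i k : H) =
      ∑ k, f.matrix.toBlocks₁₁ i k • (x k j : H) + f.matrix.toBlocks₁₂ i j • (t j : H) := by
  simpa [Matrix.toBlocks₁₁, Matrix.toBlocks₁₂, Matrix.toBlocks₂₂, extMatrix_inl_inl,
    extMatrix_inl_inr, extMatrix_inr_inr] using
    f.sum_matrix_smul_eq (.inl i) (.inr j)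

theorem toBlocks₂₁_smul (i : κ) (j : ι) :
    f.matrix.toBlocks₂₁ i j • (t i : H) = f.matrix.toBlocks₂₁ i j • (s j : H) := by
  simpa [Matrix.toBlocks₂₁, extMatrix_inl_inl, extMatrix_inr_inr, extMatrix_inr_inl] using
    f.sum_matrix_smul_eq (.inr i) (.inl j)

theorem toBlocks₂₂_smul (i j : κ) :
    f.matrix.toBlocks₂₂ i j • (t i : H) =
      ∑ k, f.matrix.toBlocks₂₁ i k • (x k j : H) + f.matrix.toBlocks₂₂ i j • (t j : H) := by
  simpa [Matrix.toBlocks₂₁, Matrix.toBlocks₂₂, extMatrix_inl_inr, extMatrix_inr_inr,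
    extMatrix_inr_inl] using
    f.sum_matrix_smul_eq (.inr i) (.inr j)

theorem coord_mul_toBlocks₂₁ (φ : ArrowForm K H) : φ.coord y * f.matrix.toBlocks₂₁ = 0 := by
  ext i j
  rw [φ.coord_mul_apply y (fun k hk => eq_of_smul_coe_eq hk (toBlocks₂₁_smul f k j)) i,
    ← sub_eq_iff_eq_add'.2 (toBlocks₁₁_smul_add f i j).symm, map_sub, map_smul, map_smul,
    φ.form_eq, sub_self, Matrix.zero_apply]

variable {f} (hC : f.matrix.toBlocks₂₁ = 0)
include hC

theorem toBlocks₁₁_eq_zero {i j : ι} (hij : s i ≠ s j) : f.matrix.toBlocks₁₁ i j = 0 := by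
  contrapose! hij
  exact eq_of_smul_coe_eq hij (by simpa [hC] using toBlocks₁₁_smul_add f i j)

theorem toBlocks₂₂_eq_zero {i j : κ} (hij : t i ≠ t j) : f.matrix.toBlocks₂₂ i j = 0 := by
  contrapose! hij
  exact eq_of_smul_coe_eq hij (by simpa [hC] using toBlocks₂₂_smul f i j)

theorem coord_mul_toBlocks₂₂ (φ : ArrowForm K H) :
    φ.coord y * f.matrix.toBlocks₂₂ = f.matrix.toBlocks₁₁ * φ.coord x := by
  ext i j
  rw [φ.coord_mul_apply y (fun k => not_imp_comm.1 (toBlocks₂₂_eq_zero hC)) i,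
    φ.mul_coord_apply x (fun k hk => (not_imp_comm.1 (toBlocks₁₁_eq_zero hC) hk).symm) j]
  have hform := congrArg (φ.form (s i) (t j)) (toBlocks₁₂_smul_add f i j)
  rw [map_add, map_add, map_smul, map_smul, φ.form_eq] at hform
  linear_combination hform

end Homs

section OrthogonalBricks

variable {K : Type} [Field K] {H : Type} [AddCommGroup H] [Module K H] [Coalgebra K H]
variable {ι κ : Type}

/-- A family of pairwise orthogonal bricks among the `ρ`-tuples of matrices whose rows and columns
are labelled by `s` and `t`: the morphisms between its members are scalar if the members agree, and
zero otherwise. Only the action on the rows is prescribed, since the joint kernels vanish. -/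
structure IsOrthogonalBricks {α ρ S T : Type*} [Fintype κ] [Fintype ι] [DecidableEq ι]
    (s : ι → S) (t : κ → T) (M : α → ρ → Matrix ι κ K) : Prop where
  eq_zero : ∀ c v, (∀ r, M c r *ᵥ v = 0) → v = 0
  exists_smul_one : ∀ c c' (A : Matrix ι ι K) (D : Matrix κ κ K),
    (∀ i j, s i ≠ s j → A i j = 0) → (∀ i j, t i ≠ t j → D i j = 0) →
    (∀ r, M c' r * D = A * M c r) → ∃ p : K, A = p • 1 ∧ (c ≠ c' → p = 0)

namespace IsOrthogonalBricks

section Matrices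

variable {α ρ S T : Type*} [Fintype κ] [Fintype ι] [DecidableEq ι]
variable {s : ι → S} {t : κ → T} {M : α → ρ → Matrix ι κ K}

theorem eq_zero_of_mul_eq_zero (hM : IsOrthogonalBricks s t M) {μ : Type} {c : α}
    {C : Matrix κ μ K} (hC : ∀ r, M c r * C = 0) : C = 0 := by
  ext k j
  exact congrFun (hM.eq_zero c (fun k => C k j) fun r => funext fun i =>
    congrFun (congrFun (hC r) i) j) k

theorem exists_eq_smul_one [DecidableEq κ] (hM : IsOrthogonalBricks s t M) {c c' : α}
    {A : Matrix ι ι K} {D : Matrix κ κ K} (hA : ∀ i j, s i ≠ s j → A i j = 0)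
    (hD : ∀ i j, t i ≠ t j → D i j = 0) (hAD : ∀ r, M c' r * D = A * M c r) :
    ∃ p : K, A = p • 1 ∧ D = p • 1 ∧ (c ≠ c' → p = 0) := by
  obtain ⟨p, rfl, hp⟩ := hM.exists_smul_one c c' A D hA hD hAD
  refine ⟨p, rfl, sub_eq_zero.1 (hM.eq_zero_of_mul_eq_zero (c := c') fun r => ?_), hp⟩
  obtain rfl | hne := eq_or_ne c c'
  · simp [Matrix.mul_sub, hAD r]
  · simp [hAD r, hp hne]

theorem comp_injective {S' T' : Type*} (hM : IsOrthogonalBricks s t M) {g : S → S'}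
    (hg : Function.Injective g) {h : T → T'} (hh : Function.Injective h) :
    IsOrthogonalBricks (g ∘ s) (h ∘ t) M where
  eq_zero := hM.eq_zero
  exists_smul_one c c' A D hA hD := hM.exists_smul_one c c' A D
    (fun i j hij => hA i j (hg.ne hij)) (fun i j hij => hD i j (hh.ne hij))

end Matrices

variable [Fintype κ] [Fintype ι] [DecidableEq ι] [DecidableEq κ] {α ρ : Type*}
variable {s : ι → GroupLike K H} {t : κ → GroupLike K H} {x : α → SkewMatrix s t}
variable {φ : ρ → ArrowForm K H} (hM : IsOrthogonalBricks s t fun c r => (φ r).coord (x c))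
include hM

theorem exists_matrix_eq_fromBlocks {c c' : α}
    (f : ComodHom K H (extComod (x c)) (extComod (x c'))) :
    ∃ (p : K) (B : Matrix ι κ K), f.matrix = Matrix.fromBlocks (p • 1) B 0 (p • 1) ∧
      (c ≠ c' → p = 0) := by
  have hC : f.matrix.toBlocks₂₁ = 0 :=
    hM.eq_zero_of_mul_eq_zero fun r => coord_mul_toBlocks₂₁ f (φ r)
  obtain ⟨p, hA, hD, hp⟩ := hM.exists_eq_smul_one
    (fun i j => toBlocks₁₁_eq_zero hC) (fun i j => toBlocks₂₂_eq_zero hC)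
    (fun r => coord_mul_toBlocks₂₂ hC (φ r))
  exact ⟨p, f.matrix.toBlocks₁₂, by rw [← hA, ← hC, ← hD, Matrix.fromBlocks_toBlocks], hp⟩

theorem indec_extComod [Nonempty ι] (c : α) : (extComod (x c)).Indec K H := by
  obtain ⟨i⟩ := ‹Nonempty ι›
  refine ⟨⟨Pi.single (.inl i) 1, Pi.single_ne_zero_iff.2 one_ne_zero⟩, fun f hf => ?_⟩
  obtain ⟨p, B, hmatrix, -⟩ := hM.exists_matrix_eq_fromBlocks f
  rw [f.toLin_eq_toLin'_matrix, ← Matrix.toLin'_mul, Matrix.toLin'.injective.eq_iff, hmatrix,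
    Matrix.fromBlocks_multiply, Matrix.fromBlocks_inj] at hf
  obtain ⟨hpp, hB, -⟩ := hf
  have hpp : p * p = p := by simpa using congrFun (congrFun hpp i) i
  have hB : p • B + p • B = B := by simpa [add_comm] using hB
  obtain rfl | rfl : p = 0 ∨ p = 1 := by
    simpa [sub_eq_zero, or_comm] using
      mul_eq_zero.1 (show (p - 1) * p = 0 by linear_combination hpp)
  · left
    rw [zero_smul, zero_add] at hB
    simp [f.toLin_eq_toLin'_matrix, hmatrix, ← hB]
  · right
    rw [one_smul, add_eq_left] at hB
    simp [f.toLin_eq_toLin'_matrix, hmatrix, hB]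

theorem eq_of_comodIso [Nonempty ι] {c c' : α}
    (hiso : ComodIso K H (extComod (x c)) (extComod (x c'))) : c = c' := by
  obtain ⟨i⟩ := ‹Nonempty ι›
  obtain ⟨f, hf, -⟩ := hiso
  obtain ⟨p, B, hmatrix, hp⟩ := hM.exists_matrix_eq_fromBlocks f
  by_contra hne
  have hcol : Matrix.toLin' (Matrix.fromBlocks ((0 : K) • (1 : Matrix ι ι K)) B 0
      ((0 : K) • (1 : Matrix κ κ K))) (Pi.single (.inl i) 1) = 0 := by
    ext (k | k) <;> simp
  have hker : f.toLin (Pi.single (.inl i) 1) = 0 := by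
    rw [f.toLin_eq_toLin'_matrix, hmatrix, hp hne]
    exact hcol
  exact Pi.single_ne_zero_iff.2 one_ne_zero (hf (hker.trans (map_zero f.toLin).symm))

end IsOrthogonalBricks

end OrthogonalBricks

section DualSystem

variable {K : Type} [Field K]

theorem exists_dual_of_linearIndependent {ι V : Type*} [DecidableEq ι] [AddCommGroup V]
    [Module K V] {v : ι → V} (hv : LinearIndependent K v) :
    ∃ ψ : ι → Module.Dual K V, ∀ i j, ψ i (v j) = if i = j then 1 else 0 := by
  obtain ⟨π, hπ⟩ :=
    (Finsupp.linearCombination K v).exists_leftInverse_of_injective (linearIndependent_iff_ker.1 hv)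
  refine ⟨fun i => Finsupp.lapply i ∘ₗ π, fun i j => ?_⟩
  have hj := LinearMap.congr_fun hπ (Finsupp.single j 1)
  rw [LinearMap.comp_apply, Finsupp.linearCombination_single, one_smul, LinearMap.id_apply] at hj
  simp [hj, Finsupp.single_apply, eq_comm]

variable {H : Type} [Ring H] [Bialgebra K H]

theorem exists_dual_of_le_ntRank {g h : H} {n : ℕ} (hn : n ≤ ntRank K H g h) :
    ∃ (y : Fin n → skewPrim K H g h) (ψ : Fin n → Module.Dual K H),
      (∀ r, ψ r g = ψ r h) ∧ ∀ r r', ψ r (y r') = if r = r' then 1 else 0 := by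
  obtain ⟨v, hv⟩ := Module.le_rank_iff.1 hn
  let q := (Submodule.span K {g - h}).mkQ
  let j := Submodule.mapQ _ (Submodule.span K {g - h}) (skewPrim K H g h).subtype le_rfl
  have hj : LinearMap.ker j = ⊥ := by
    rw [Submodule.ker_mapQ, Submodule.mkQ_map_self]
  obtain ⟨ψ, hψ⟩ := exists_dual_of_linearIndependent (hv.map' j hj)
  choose y hy using fun r => Submodule.mkQ_surjective _ (v r)
  refine ⟨y, fun r => ψ r ∘ₗ q, fun r => congrArg (ψ r) ?_, fun r r' => ?_⟩
  · exact (Submodule.Quotient.eq _).2 (Submodule.mem_span_singleton_self _)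
  · rw [← hψ r r', Function.comp_apply, ← hy r']
    rfl

theorem ArrowForm.exists_dual_system (K : Type) [Field K] (H : Type) [Ring H] [Bialgebra K H]
    (n : ℕ) :
    ∃ (y : Fin n → ∀ g h : GroupLike K H, skewPrim K H g h) (φ : Fin n → ArrowForm K H),
      ∀ g h : GroupLike K H, n ≤ ntRank K H g h →
        ∀ r r', (φ r).form g h (y r' g h) = if r = r' then 1 else 0 := by
  have hlocal (g h : GroupLike K H) : ∃ (y : Fin n → skewPrim K H g h)
      (ψ : Fin n → Module.Dual K H), (∀ r, ψ r g = ψ r h) ∧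
        (n ≤ ntRank K H g h → ∀ r r', ψ r (y r') = if r = r' then 1 else 0) := by
    by_cases hn : n ≤ ntRank K H g h
    · obtain ⟨y, ψ, hψ, hy⟩ := exists_dual_of_le_ntRank hn
      exact ⟨y, ψ, hψ, fun _ => hy⟩
    · exact ⟨0, 0, fun _ => rfl, fun h => absurd h hn⟩
  choose y ψ hψ hy using hlocal
  exact ⟨fun r g h => y g h r, fun r => ⟨fun g h => ψ g h r, fun g h => hψ g h r⟩, hy⟩

theorem IsOrthogonalBricks.not_discreteCorepType {α : Type*} [Infinite α] {m n l : ℕ} [NeZero m]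
    {s : Fin m → GroupLike K H} {t : Fin n → GroupLike K H}
    {M : α → Fin l → Matrix (Fin m) (Fin n) K} (hM : IsOrthogonalBricks s t M)
    (hl : ∀ c r i j, M c r i j ≠ 0 → l ≤ ntRank K H (s i) (t j)) : ¬ DiscreteCorepType K H := by
  obtain ⟨y, φ, hφ⟩ := ArrowForm.exists_dual_system K H l
  let x (c : α) : SkewMatrix s t := fun i j => ∑ r, M c r i j • y r (s i) (t j)
  have hcoord (c : α) (r : Fin l) : (φ r).coord (x c) = M c r := by
    ext i j
    by_cases hij : ∀ r, M c r i j = 0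
    · simp [ArrowForm.coord, x, hij]
    · obtain ⟨r', hr'⟩ := not_forall.1 hij
      simp [ArrowForm.coord, x, hφ _ _ (hl c r' i j hr')]
  have hx : IsOrthogonalBricks s t fun c r => (φ r).coord (x c) := by
    simpa only [hcoord] using hM
  exact not_discreteCorepType_of_infinite_family (fun c => extComod (x c)) _ hx.indec_extComod
    (fun c => hasDimVector_extComod (x c)) fun _ _ => hx.eq_of_comodIso

end DualSystem

section Bricks

variable {K : Type} [Field K]

theorem isOrthogonalBricks_kronecker {S T : Type*} (s : Fin 1 → S) (t : Fin 1 → T) :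
    IsOrthogonalBricks s t fun (c : K) r => !![![1, c] r] where
  eq_zero c v hv := by
    ext i
    simpa [Fin.fin_one_eq_zero i, Matrix.mulVec, dotProduct] using congrFun (hv 0) 0
  exists_smul_one c c' A D _ _ hAD := by
    have hDA : D 0 0 = A 0 0 := by
      simpa [Matrix.mul_apply] using congrFun (congrFun (hAD 0) 0) 0
    have hcDA : c' * D 0 0 = A 0 0 * c := by
      simpa [Matrix.mul_apply] using congrFun (congrFun (hAD 1) 0) 0
    refine ⟨A 0 0, by ext i j; fin_cases i; fin_cases j; simp, fun hne => ?_⟩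
    exact (mul_eq_zero.1 (show (c' - c) * A 0 0 = 0 by
      linear_combination hcDA - c' * hDA)).resolve_left (sub_ne_zero.2 hne.symm)

/-- The labels of the rows and of the columns of `fourLinesMatrix c`: the vertex `0` has
multiplicity two, the vertices `1` and `2` have multiplicity one. -/
def fourLinesLabel : Fin 4 → Fin 3 := ![0, 0, 1, 2]

/-- The representation with parameter `c` of the quiver of type `D̃₅` with arrows from the source
`0` to all sinks and from all sources to the sink `0`. The arrow `0 → 0` is the identity of `K²`,
the other arrows from the source `0` are forms with the two axes as kernels, and the other arrows
to the sink `0` have images spanned by `(1, 1)` and `(c, c + 1)`, which are distinct lines for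
every `c`. The cross-ratio of these four lines depends on `c`. -/
def fourLinesMatrix (c : K) : Matrix (Fin 4) (Fin 4) K :=
  !![1, 0, 1, c; 0, 1, 1, c + 1; 1, 0, 0, 0; 0, 1, 0, 0]

theorem fourLinesLabel_eq_zero_of_fourLinesMatrix_ne_zero {c : K} {i j : Fin 4}
    (hij : fourLinesMatrix c i j ≠ 0) : fourLinesLabel i = 0 ∨ fourLinesLabel j = 0 := by
  fin_cases i <;> fin_cases j <;> simp_all [fourLinesMatrix, fourLinesLabel]

theorem exists_eq_of_fourLinesLabel_ne {A : Matrix (Fin 4) (Fin 4) K}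
    (hA : ∀ i j, fourLinesLabel i ≠ fourLinesLabel j → A i j = 0) :
    ∃ a b c d p q : K, A = !![a, b, 0, 0; c, d, 0, 0; 0, 0, p, 0; 0, 0, 0, q] := by
  refine ⟨A 0 0, A 0 1, A 1 0, A 1 1, A 2 2, A 3 3, ?_⟩
  ext i j
  fin_cases i <;> fin_cases j <;> first | rfl | exact hA _ _ (by simp [fourLinesLabel])

theorem isOrthogonalBricks_fourLinesMatrix :
    IsOrthogonalBricks fourLinesLabel fourLinesLabel
      fun (c : K) (_ : Fin 1) => fourLinesMatrix c where
  eq_zero c v hv := by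
    have hentry (i : Fin 4) : ∑ j, fourLinesMatrix c i j * v j = 0 := congrFun (hv 0) i
    have h₀ : v 0 = 0 := by simpa [fourLinesMatrix, Fin.sum_univ_four] using hentry 2
    have h₁ : v 1 = 0 := by simpa [fourLinesMatrix, Fin.sum_univ_four] using hentry 3
    have h₂₃ : v 2 + c * v 3 = 0 := by
      simpa [fourLinesMatrix, Fin.sum_univ_four, h₀] using hentry 0
    have h₂₃' : v 2 + (c + 1) * v 3 = 0 := by
      simpa [fourLinesMatrix, Fin.sum_univ_four, h₁] using hentry 1
    have h₃ : v 3 = 0 := by linear_combination h₂₃' - h₂₃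
    have h₂ : v 2 = 0 := by simpa [h₃] using h₂₃
    ext i
    fin_cases i <;> assumption
  exists_smul_one c c' A D hA hD hAD := by
    obtain ⟨a₁, a₂, a₃, a₄, a₅, a₆, rfl⟩ := exists_eq_of_fourLinesLabel_ne hA
    obtain ⟨d₁, d₂, d₃, d₄, d₅, d₆, rfl⟩ := exists_eq_of_fourLinesLabel_ne hD
    obtain ⟨⟨rfl, rfl, h₁, h₂⟩, ⟨rfl, rfl, h₃, h₄⟩, ⟨rfl, rfl⟩, rfl, rfl⟩ :
        (d₁ = a₁ ∧ d₂ = a₂ ∧ d₅ = a₁ + a₂ ∧ c' * d₆ = a₁ * c + a₂ * (c + 1)) ∧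
        (d₃ = a₃ ∧ d₄ = a₄ ∧ d₅ = a₃ + a₄ ∧ (c' + 1) * d₆ = a₃ * c + a₄ * (c + 1)) ∧
        (d₁ = a₅ ∧ d₂ = 0) ∧ d₃ = 0 ∧ d₄ = a₆ := by
      simpa [fourLinesMatrix, ← Matrix.ext_iff, Fin.forall_fin_succ] using hAD
    obtain rfl : d₄ = d₁ := by linear_combination h₁ - h₃
    refine ⟨d₄, ?_, fun hne => ?_⟩
    · ext i j
      fin_cases i <;> fin_cases j <;> simp
    · refine (mul_eq_zero.1 ?_).resolve_left (sub_ne_zero.2 hne)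
      linear_combination c' * (h₄ - h₂) - h₂

end Bricks

section Bialgebra

variable {K : Type} [Field K] [Infinite K] {H : Type} [Ring H] [Bialgebra K H]

theorem ntRank_le_one (hdiscrete : DiscreteCorepType K H) (g h : GroupLike K H) :
    ntRank K H g h ≤ 1 := by
  by_contra! hgh
  have htwo : ((2 : ℕ) : Cardinal) ≤ ntRank K H g h := by
    rwa [Nat.cast_two, Cardinal.two_le_iff_one_lt]
  exact (isOrthogonalBricks_kronecker (K := K) (fun _ => g) (fun _ => h)).not_discreteCorepType
    (fun _ _ _ _ _ => htwo) hdiscrete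

theorem not_discreteCorepType_of_ntRank_ne_zero {g h : Fin 3 → GroupLike K H}
    (hg : Function.Injective g) (hh : Function.Injective h)
    (hout : ∀ j, ntRank K H (g 0) (h j) ≠ 0) (hin : ∀ i, ntRank K H (g i) (h 0) ≠ 0) :
    ¬ DiscreteCorepType K H := by
  refine (isOrthogonalBricks_fourLinesMatrix (K := K).comp_injective hg hh).not_discreteCorepType
    fun c _ i j hij => ?_
  rw [Nat.cast_one, Cardinal.one_le_iff_ne_zero]
  obtain hi | hj := fourLinesLabel_eq_zero_of_fourLinesMatrix_ne_zero hij
  · simpa only [Function.comp_apply, hi] using hout (fourLinesLabel j)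
  · simpa only [Function.comp_apply, hj] using hin (fourLinesLabel i)

end Bialgebra

section Translation

variable {K : Type} [CommRing K] {H : Type} [Ring H]

theorem mul_mem_skewPrim [Bialgebra K H] (u : GroupLike K H) {g h x : H}
    (hx : x ∈ skewPrim K H g h) : (u : H) * x ∈ skewPrim K H (u * g) (u * h) := by
  rw [mem_skewPrim] at hx ⊢
  rw [Bialgebra.comul_mul, hx, u.2.comul_eq_tmul_self, mul_add, Algebra.TensorProduct.tmul_mul_tmul,
    Algebra.TensorProduct.tmul_mul_tmul]

theorem mul_mem_span_mul_sub_mul_iff [Algebra K H] {u : H} (hu : IsUnit u) {g h x : H} :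
    u * x ∈ Submodule.span K {u * g - u * h} ↔ x ∈ Submodule.span K {g - h} := by
  simp only [Submodule.mem_span_singleton, ← mul_sub, ← mul_smul_comm, hu.mul_right_inj]

variable [HopfAlgebra K H]

theorem ntRank_le_ntRank_mul_left (u g h : GroupLike K H) :
    ntRank K H g h ≤ ntRank K H ↑(u * g) ↑(u * h) := by
  let f : skewPrim K H g h →ₗ[K] skewPrim K H (u * g : GroupLike K H) (u * h : GroupLike K H) :=
    (LinearMap.mulLeft K (u : H)).restrict fun x hx => mul_mem_skewPrim u hx
  let p := (Submodule.span K {(g : H) - h}).comap (skewPrim K H g h).subtype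
  let q := (Submodule.span K {((u * g : GroupLike K H) : H) - (u * h : GroupLike K H)}).comap
    (skewPrim K H (u * g : GroupLike K H) (u * h : GroupLike K H)).subtype
  have hpq : q.comap f = p := Submodule.ext fun x => mul_mem_span_mul_sub_mul_iff u.2.isUnit
  refine LinearMap.rank_le_of_injective (p.mapQ q f hpq.ge) (LinearMap.ker_eq_bot.1 ?_)
  rw [Submodule.ker_mapQ, hpq, Submodule.mkQ_map_self]

theorem ntRank_mul_left (u g h : GroupLike K H) :
    ntRank K H ↑(u * g) ↑(u * h) = ntRank K H g h := by
  refine le_antisymm ?_ (ntRank_le_ntRank_mul_left u g h)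
  simpa using ntRank_le_ntRank_mul_left u⁻¹ (u * g) (u * h)

end Translation

section Hopf

variable {K : Type} [Field K] [Infinite K] {H : Type} [Ring H] [HopfAlgebra K H]

theorem exists_ntRank_eq_zero_of_injective_target (hdiscrete : DiscreteCorepType K H)
    (g : GroupLike K H) {h : Fin 3 → GroupLike K H} (hh : Function.Injective h) :
    ∃ i, ntRank K H g (h i) = 0 := by
  by_contra! hne
  refine not_discreteCorepType_of_ntRank_ne_zero (g := fun i => h 0 * (h i)⁻¹ * g) ?_ hh
    (fun j => by simpa using hne j) (fun i => ?_) hdiscrete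
  · exact fun i j hij => hh (by simpa using hij)
  · have htranslate := ntRank_mul_left (h 0 * (h i)⁻¹) g (h i)
    rw [inv_mul_cancel_right] at htranslate
    exact htranslate ▸ hne i

theorem exists_ntRank_eq_zero_of_injective_source (hdiscrete : DiscreteCorepType K H)
    (h : GroupLike K H) {g : Fin 3 → GroupLike K H} (hg : Function.Injective g) :
    ∃ i, ntRank K H (g i) h = 0 := by
  by_contra! hne
  refine not_discreteCorepType_of_ntRank_ne_zero (h := fun i => g 0 * (g i)⁻¹ * h) hg ?_
    (fun j => ?_) (fun i => by simpa using hne i) hdiscrete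
  · exact fun i j hij => hg (by simpa using hij)
  · have htranslate := ntRank_mul_left (g 0 * (g j)⁻¹) (g j) h
    rw [inv_mul_cancel_right] at htranslate
    exact htranslate ▸ hne j

end Hopf

theorem at_most_two_arrows_general
    (K : Type) [Field K] [Infinite K]
    (H : Type) [Ring H] [HopfAlgebra K H] (hdiscrete : DiscreteCorepType K H) :
    (∀ g : H, IsGrouplike K H g →
      Cardinal.sum (fun u : {u : H // IsGrouplike K H u} => ntRank K H g u.1) ≤ 2 ∧
      Cardinal.sum (fun u : {u : H // IsGrouplike K H u} => ntRank K H u.1 g) ≤ 2) ∧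
    (∀ g h : H, IsGrouplike K H g → IsGrouplike K H h → ntRank K H g h ≤ 1) := by
  have hle (g h : H) (hg : IsGrouplike K H g) (hh : IsGrouplike K H h) : ntRank K H g h ≤ 1 :=
    ntRank_le_one hdiscrete hg.toGroupLike hh.toGroupLike
  refine ⟨fun g hg => ⟨?_, ?_⟩, hle⟩
  · refine (cardinalSum_le_of_forall_injective (n := 2) ?_ fun e he => ?_).trans_eq Nat.cast_two
    · exact fun u => hle g u.1 hg u.2
    · exact exists_ntRank_eq_zero_of_injective_target hdiscrete hg.toGroupLike
        (h := fun i => (e i).2.toGroupLike) (IsGrouplike.toGroupLike_injective.comp he)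
  · refine (cardinalSum_le_of_forall_injective (n := 2) ?_ fun e he => ?_).trans_eq Nat.cast_two
    · exact fun u => hle u.1 g u.2 hg
    · exact exists_ntRank_eq_zero_of_injective_source hdiscrete hg.toGroupLike
        (g := fun i => (e i).2.toGroupLike) (IsGrouplike.toGroupLike_injective.comp he)

theorem at_most_two_arrows
    (K : Type) [Field K] [IsAlgClosed K]
    (H : Type) [Ring H] [HopfAlgebra K H]
    (hpointed : IsPointedCoalgebra K H) (hdiscrete : DiscreteCorepType K H) :
    (∀ g : H, IsGrouplike K H g →
      Cardinal.sum (fun u : {u : H // IsGrouplike K H u} => ntRank K H g u.1) ≤ 2 ∧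
      Cardinal.sum (fun u : {u : H // IsGrouplike K H u} => ntRank K H u.1 g) ≤ 2) ∧
    (∀ g h : H, IsGrouplike K H g → IsGrouplike K H h → g ≠ h → ntRank K H g h ≤ 1) := by
  obtain ⟨hsum, hle⟩ := at_most_two_arrows_general K H hdiscrete
  exact ⟨hsum, fun g h hg hh _ => hle g h hg hh⟩
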